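/- arXiv:1504.07599 — 6 statements merged into one kernel-verified Lean document; each statement's English description precedes it below -/
import Mathlib

section
/- Let V be a real normed vector space, F, Ḟ : V → V, Δt_FE > 0 and K > 0. Assume F satisfies the forward Euler condition and Ḟ satisfies the second derivative condition with constant K. Let α ≥ 0 and β > 0. Then for every v ∈ V and every Δt with 0 ≤ Δt ≤ (K/(2β))·(√(α²K² + 4β) − αK)·Δt_FE, the two-derivative building block step satisfies ‖v + α·Δt·F(v) + β·Δt²·Ḟ(v)‖ ≤ ‖v‖. -/
/-! The step-size bound says that `r = dt / (K * dtFE)` is at most the positive root of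
`β r² + α K r = 1`, so `1 - α K r - β r²`, `α K r` and `β r²` are convex weights. With these
weights the building block is a convex combination of `v`, the full forward Euler step
`v + dtFE • F v` and the full second derivative step `v + (K * dtFE) ^ 2 • Fd v`, hence it lies
in every convex set containing these three points, such as the ball of radius `‖v‖`. -/

theorem quadratic_nonpos_iff_mem_Icc {a b c : ℝ} (ha : 0 < a) (hD : 0 ≤ discrim a b c) (x : ℝ) :
    a * (x * x) + b * x + c ≤ 0 ↔
      x ∈ Set.Icc ((-b - √(discrim a b c)) / (2 * a)) ((-b + √(discrim a b c)) / (2 * a)) := by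
  have completed_square :
      4 * a * (a * (x * x) + b * x + c) = (2 * a * x + b) ^ 2 - discrim a b c := by
    rw [discrim]; ring
  calc a * (x * x) + b * x + c ≤ 0
    _ ↔ 4 * a * (a * (x * x) + b * x + c) ≤ 0 := by
      rw [← smul_eq_mul (4 * a), smul_nonpos_iff_nonpos_of_pos_left (by positivity)]
    _ ↔ (2 * a * x + b) ^ 2 ≤ discrim a b c := by rw [completed_square, sub_nonpos]
    _ ↔ -√(discrim a b c) ≤ 2 * a * x + b ∧ 2 * a * x + b ≤ √(discrim a b c) := Real.sq_le hD
    _ ↔ _ := by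
      rw [Set.mem_Icc, div_le_iff₀' (by positivity), le_div_iff₀' (by positivity)]
      constructor <;> rintro ⟨_, _⟩ <;> constructor <;> linarith

theorem mul_sq_add_mul_le_of_le_root {a b c x : ℝ} (ha : 0 < a) (hc : 0 ≤ c) (hx : 0 ≤ x)
    (hx_le : x ≤ (√(b ^ 2 + 4 * a * c) - b) / (2 * a)) : a * x ^ 2 + b * x ≤ c := by
  have hD : discrim a b (-c) = b ^ 2 + 4 * a * c := by rw [discrim]; ring
  have neg_b_le_sqrt : -b ≤ √(b ^ 2 + 4 * a * c) :=
    (neg_le_abs b).trans (Real.abs_le_sqrt (le_add_of_nonneg_right (by positivity)))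
  have root_nonpos : (-b - √(b ^ 2 + 4 * a * c)) / (2 * a) ≤ 0 :=
    div_nonpos_of_nonpos_of_nonneg (sub_nonpos.2 neg_b_le_sqrt) (by positivity)
  have quadratic_nonpos : a * (x * x) + b * x + -c ≤ 0 := by
    rw [quadratic_nonpos_iff_mem_Icc ha (by rw [hD]; positivity), hD, neg_add_eq_sub]
    exact ⟨root_nonpos.trans hx, hx_le⟩
  linarith

theorem add_smul_add_smul_mem_of_convex {𝕜 E : Type*} [Field 𝕜] [LinearOrder 𝕜]
    [IsStrictOrderedRing 𝕜] [AddCommGroup E] [Module 𝕜 E] {C : Set E} (hC : Convex 𝕜 C)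
    {v x y : E} (hv : v ∈ C) (hx : v + x ∈ C) (hy : v + y ∈ C) {a b : 𝕜} (ha : 0 ≤ a)
    (hb : 0 ≤ b) (hab : a + b ≤ 1) : v + a • x + b • y ∈ C := by
  obtain ⟨z, hz, hz_eq⟩ := hC.exists_mem_add_smul_eq hx hy ha hb
  have h : v + a • x + b • y = v + (a + b) • (z - v) := by
    rw [smul_sub, hz_eq]; module
  rw [h]
  exact hC.add_smul_sub_mem hv hz ⟨add_nonneg ha hb, hab⟩

theorem building_block_ssp_general {V : Type*} [AddCommGroup V] [Module ℝ V] {C : Set V}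
    (hC : Convex ℝ C) {v f g : V} {τ K α β dt : ℝ} (hτ : 0 < τ) (hK : 0 < K) (hv : v ∈ C)
    (hf : v + τ • f ∈ C) (hg : v + (K * τ) ^ 2 • g ∈ C) (hα : 0 ≤ α) (hβ : 0 < β) (hdt : 0 ≤ dt)
    (hdt_le : dt ≤ K / (2 * β) * (√(α ^ 2 * K ^ 2 + 4 * β) - α * K) * τ) :
    v + (α * dt) • f + (β * dt ^ 2) • g ∈ C := by
  obtain ⟨r, rfl⟩ : ∃ r, dt = r * (K * τ) := ⟨dt / (K * τ), by field_simp⟩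
  have hr : 0 ≤ r := nonneg_of_mul_nonneg_left hdt (by positivity)
  have r_le_root : r ≤ (√((α * K) ^ 2 + 4 * β * 1) - α * K) / (2 * β) := by
    refine le_of_mul_le_mul_right (hdt_le.trans_eq ?_) (by positivity : 0 < K * τ)
    rw [mul_pow, mul_one]; ring
  have weights_le_one : α * K * r + β * r ^ 2 ≤ 1 := by
    rw [add_comm]
    exact mul_sq_add_mul_le_of_le_root hβ zero_le_one hr r_le_root
  have h := add_smul_add_smul_mem_of_convex hC hv hf hg (by positivity) (by positivity)
    weights_le_one
  convert h using 2 <;> module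

/-- SSP property of the two-derivative building block
`v ↦ v + α·Δt·F(v) + β·Δt²·Ḟ(v)` under the forward Euler condition on `F` and the
second derivative condition (with constant `K`) on `Ḟ`. -/
theorem building_block_ssp {V : Type*} [NormedAddCommGroup V] [NormedSpace ℝ V]
    (F Fd : V → V) (dtFE K : ℝ) (hdtFE : 0 < dtFE) (hK : 0 < K)
    (hFE : ∀ v : V, ∀ t : ℝ, 0 ≤ t → t ≤ dtFE → ‖v + t • F v‖ ≤ ‖v‖)
    (hSD : ∀ v : V, ∀ t : ℝ, 0 ≤ t → t ≤ K * dtFE → ‖v + t ^ 2 • Fd v‖ ≤ ‖v‖)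
    (α β : ℝ) (hα : 0 ≤ α) (hβ : 0 < β) :
    ∀ v : V, ∀ dt : ℝ, 0 ≤ dt →
      dt ≤ K / (2 * β) * (Real.sqrt (α ^ 2 * K ^ 2 + 4 * β) - α * K) * dtFE →
      ‖v + (α * dt) • F v + (β * dt ^ 2) • Fd v‖ ≤ ‖v‖ := by
  intro v dt hdt hdt_le
  rw [← mem_closedBall_zero_iff]
  exact building_block_ssp_general (convex_closedBall 0 ‖v‖) hdtFE hK (by simp)
    (by simpa using hFE v dtFE hdtFE.le le_rfl)
    (by simpa using hSD v (K * dtFE) (by positivity) le_rfl) hα hβ hdt hdt_le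
end

section
/- Let V be a real normed vector space, F, Ḟ : V → V, Δt_FE > 0 and K > 0. Assume F satisfies the forward Euler condition and Ḟ satisfies the second derivative condition with constant K. Let n ≥ 1, let S, Ŝ be n×n real matrices that are strictly lower triangular (S i j = 0 and Ŝ i j = 0 whenever j ≥ i), let r > 0, and set M = I + r·S + (r²/K²)·Ŝ (M is invertible since it is unit lower triangular). Assume that every entry of the vector M⁻¹·e (where e is the all-ones vector), every entry of the matrix r·M⁻¹·S, and every entry of the matrix (r²/K²)·M⁻¹·Ŝ is nonnegative. Let u ∈ V, let 0 ≤ Δt ≤ r·Δt_FE, and let y : {1,…,n} → V satisfy the stage equations y_i = u + Δt·∑_{j=1}^{n} S_{ij}·F(y_j) + Δt²·∑_{j=1}^{n} Ŝ_{ij}·Ḟ(y_j) for every i. Then ‖y_i‖ ≤ ‖u‖ for every i; in particular the final stage y_n (the numerical update u^{n+1}) satisfies ‖y_n‖ ≤ ‖u‖. -/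
/-!
Put `P = r·M⁻¹S` and `Q = (r²/K²)·M⁻¹Ŝ`, so that `M⁻¹ = 1 - P - Q`. Multiplying the stage equations
by `M⁻¹` gives the Shu–Osher form `y = (M⁻¹e)·u + P·a + Q·b`, where `a` and `b` consist of
forward Euler and second derivative steps from the stages. Each stage is thus a convex combination,
and any convex functional `φ` satisfies `φ(y) ≤ φ(u)·M⁻¹e + (P + Q)·φ(y)`, that is,
`M⁻¹·(φ(y) - φ(u)·e) ≤ 0`.

Now `M⁻¹` is invertible with nonpositive off-diagonal entries and nonnegative row sums. Such a
matrix `B` obeys a maximum principle: `B z ≤ 0` implies `z ≤ 0`. Indeed, if `z` had a positive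
maximum, then the rows of `B` where it is attained would sum to zero and vanish outside the
corresponding columns, so `B` would be block triangular with a singular diagonal block.
-/

open Matrix

section MaximumPrinciple

variable {ι R : Type*} [Fintype ι]

lemma mulVec_apply_eq_mul_add_sum_mul_sub [CommRing R] (B : Matrix ι ι R) (z : ι → R) (i : ι) :
    (B *ᵥ z) i = z i * (B *ᵥ 1) i + ∑ j, B i j * (z j - z i) := by
  simp only [mulVec_eq_sum, Finset.sum_apply, Pi.smul_apply, transpose_apply, op_smul_eq_smul,
    smul_eq_mul, Pi.one_apply, one_mul, Finset.mul_sum, ← Finset.sum_add_distrib]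
  exact Finset.sum_congr rfl fun j _ ↦ by ring

lemma exists_mulVec_ne_zero_of_isUnit [DecidableEq ι] [CommRing R] {B : Matrix ι ι R}
    (hB : IsUnit B) {p : ι → Prop} (hp : ∀ i j, p i → ¬p j → B i j = 0) {v : ι → R} {i : ι}
    (hi : p i) (hv : v i ≠ 0) : ∃ k, p k ∧ (B *ᵥ v) k ≠ 0 := by
  have : Invertible B := hB.invertible
  have hB_block : B.BlockTriangular p := fun k l hlk ↦ by
    obtain ⟨hk, hl⟩ := Classical.not_imp.mp hlk.not_ge
    exact hp k l hk hl
  have hinv_block : B⁻¹.BlockTriangular p := blockTriangular_inv_of_blockTriangular hB_block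
  by_contra! h
  refine hv ?_
  calc v i = (B⁻¹ *ᵥ (B *ᵥ v)) i := by simp
    _ = ∑ k, B⁻¹ i k * (B *ᵥ v) k := rfl
    _ = 0 := Finset.sum_eq_zero fun k _ ↦ by
      by_cases hk : p k
      · rw [h k hk, mul_zero]
      · rw [hinv_block (lt_of_le_not_ge (fun h ↦ absurd h hk) fun h ↦ hk (h hi)), zero_mul]

variable [CommRing R] [LinearOrder R] [IsStrictOrderedRing R] {B : Matrix ι ι R} {z : ι → R}

lemma mulVec_one_eq_zero_and_apply_eq_zero_of_forall_le {i : ι} (hoff : ∀ j, i ≠ j → B i j ≤ 0)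
    (hrow : 0 ≤ (B *ᵥ 1) i) (hz : (B *ᵥ z) i ≤ 0) (hpos : 0 < z i) (hmax : ∀ j, z j ≤ z i) :
    (B *ᵥ 1) i = 0 ∧ ∀ j, z j < z i → B i j = 0 := by
  have hterm : ∀ j, 0 ≤ B i j * (z j - z i) := fun j ↦ by
    obtain rfl | hij := eq_or_ne i j
    · simp
    · exact mul_nonneg_of_nonpos_of_nonpos (hoff j hij) (sub_nonpos.mpr (hmax j))
  have hsum : 0 ≤ ∑ j, B i j * (z j - z i) := Finset.sum_nonneg fun j _ ↦ hterm j
  have hdiag : 0 ≤ z i * (B *ᵥ 1) i := mul_nonneg hpos.le hrow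
  rw [mulVec_apply_eq_mul_add_sum_mul_sub] at hz
  have hdiag_zero : z i * (B *ᵥ 1) i = 0 := by linarith
  have hsum_zero : ∑ j, B i j * (z j - z i) = 0 := by linarith
  refine ⟨(mul_eq_zero.mp hdiag_zero).resolve_left hpos.ne', fun j hj ↦ ?_⟩
  have hterm_zero : B i j * (z j - z i) = 0 :=
    (Finset.sum_eq_zero_iff_of_nonneg fun j _ ↦ hterm j).mp hsum_zero j (Finset.mem_univ j)
  exact (mul_eq_zero.mp hterm_zero).resolve_right (sub_neg.mpr hj).ne

theorem nonpos_of_mulVec_nonpos [DecidableEq ι] (hB : IsUnit B)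
    (hoff : ∀ i j, i ≠ j → B i j ≤ 0) (hrow : ∀ i, 0 ≤ (B *ᵥ 1) i) (hz : ∀ i, (B *ᵥ z) i ≤ 0)
    (i : ι) : z i ≤ 0 := by
  by_contra! hi
  have : Nonempty ι := ⟨i⟩
  obtain ⟨m, hm⟩ := Finite.exists_max z
  have hrows : ∀ k, z k = z m → (B *ᵥ 1) k = 0 ∧ ∀ j, z j < z k → B k j = 0 := fun k hk ↦
    mulVec_one_eq_zero_and_apply_eq_zero_of_forall_le (hoff k) (hrow k) (hz k)
      (hk ▸ hi.trans_le (hm i)) (hk ▸ hm)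
  have hblock : ∀ k j, z k = z m → z j ≠ z m → B k j = 0 := fun k j hk hj ↦
    (hrows k hk).2 j (hk ▸ (hm j).lt_of_ne hj)
  obtain ⟨k, hk, hk_ne⟩ := exists_mulVec_ne_zero_of_isUnit hB hblock (v := 1) (i := m) rfl
    one_ne_zero
  exact hk_ne (hrows k hk).1

end MaximumPrinciple

lemma isUnit_one_add_of_strictly_lower {ι R : Type*} [Fintype ι] [LinearOrder ι] [CommRing R]
    {N : Matrix ι ι R} (hN : ∀ i j, i ≤ j → N i j = 0) : IsUnit (1 + N) := by
  have hlower : (1 + N).IsLowerTriangular :=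
    blockTriangular_one.add fun i j hij ↦ hN i j (OrderDual.toDual_lt_toDual.mp hij).le
  rw [isUnit_iff_isUnit_det, det_of_isLowerTriangular _ hlower]
  simp [hN]

lemma convexOn_map_smul_add_sum_add_sum_le {ι 𝕜 V : Type*} [Fintype ι] [Field 𝕜] [LinearOrder 𝕜]
    [IsStrictOrderedRing 𝕜] [AddCommGroup V] [Module 𝕜 V] {φ : V → 𝕜}
    (hφ : ConvexOn 𝕜 Set.univ φ) {c : 𝕜} {p q : ι → 𝕜} (hc : 0 ≤ c) (hp : ∀ j, 0 ≤ p j)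
    (hq : ∀ j, 0 ≤ q j) (hsum : c + ∑ j, p j + ∑ j, q j = 1) (u : V) (a b : ι → V) :
    φ (c • u + ∑ j, p j • a j + ∑ j, q j • b j) ≤
      c * φ u + ∑ j, p j * φ (a j) + ∑ j, q j * φ (b j) := by
  have hjensen := hφ.map_sum_le (t := Finset.univ)
    (w := fun k : Option (ι ⊕ ι) ↦ k.elim c (Sum.elim p q))
    (p := fun k ↦ k.elim u (Sum.elim a b))
    (by simp [Option.forall, hc, hp, hq])
    (by simpa [Fintype.sum_option, Fintype.sum_sum_type, add_assoc] using hsum) (by simp)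
  simpa [Fintype.sum_option, Fintype.sum_sum_type, add_assoc] using hjensen

section ShuOsher

open scoped Matrix.Module

variable {ι 𝕜 V : Type*} [Fintype ι] [DecidableEq ι] [Field 𝕜] [AddCommGroup V] [Module 𝕜 V]

/-- The matrix `M = I + r·S + (r²/K²)·Ŝ` whose inverse brings a two-derivative method with
coefficients `S`, `Ŝ` into Shu–Osher form. -/
def shuOsherMatrix (S Shat : Matrix ι ι 𝕜) (r K : 𝕜) : Matrix ι ι 𝕜 :=
  1 + r • S + (r ^ 2 / K ^ 2) • Shat

/-- The stage equations `y = e·u + Δt·S·F(y) + Δt²·Ŝ·Ḟ(y)` of a multistage two-derivative method.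
Matrices act on stage vectors `ι → V` through `Matrix.Module`. -/
def IsStageVector (F Fd : V → V) (S Shat : Matrix ι ι 𝕜) (dt : 𝕜) (u : V) (y : ι → V) : Prop :=
  y = (fun _ ↦ u) + dt • S • (F ∘ y) + dt ^ 2 • Shat • (Fd ∘ y)

lemma isUnit_shuOsherMatrix_of_strictly_lower {ι 𝕜 : Type*} [Fintype ι] [LinearOrder ι] [Field 𝕜]
    {S Shat : Matrix ι ι 𝕜} (hS : ∀ i j, i ≤ j → S i j = 0) (hShat : ∀ i j, i ≤ j → Shat i j = 0)
    (r K : 𝕜) : IsUnit (shuOsherMatrix S Shat r K) := by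
  rw [shuOsherMatrix, add_assoc]
  exact isUnit_one_add_of_strictly_lower fun i j hij ↦ by simp [hS i j hij, hShat i j hij]

lemma inv_shuOsherMatrix_eq_one_sub {S Shat : Matrix ι ι 𝕜} {r K : 𝕜}
    (hM : IsUnit (shuOsherMatrix S Shat r K)) :
    (shuOsherMatrix S Shat r K)⁻¹ = 1 - r • ((shuOsherMatrix S Shat r K)⁻¹ * S)
      - (r ^ 2 / K ^ 2) • ((shuOsherMatrix S Shat r K)⁻¹ * Shat) := by
  set M := shuOsherMatrix S Shat r K with hM_def
  have hinv : M⁻¹ * M = 1 := nonsing_inv_mul M ((isUnit_iff_isUnit_det M).mp hM)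
  rw [← hinv]
  nth_rw 3 [hM_def]
  simp only [shuOsherMatrix, mul_add, mul_one, mul_smul_comm]
  abel

lemma smul_matrix_smul_add_div_smul {s t : 𝕜} (hs : s ≠ 0) (A : Matrix ι ι 𝕜) (y f : ι → V) :
    (s • A) • (y + (t / s) • f) = (s • A) • y + t • A • f := by
  ext i
  simp only [Module.smul_apply, Pi.add_apply, Pi.smul_apply, Matrix.smul_apply, smul_add,
    Finset.sum_add_distrib, Finset.smul_sum, smul_smul, smul_eq_mul]
  congr! 3
  field_simp

theorem IsStageVector.eq_shuOsher_form {F Fd : V → V} {S Shat : Matrix ι ι 𝕜} {dt r K : 𝕜} {u : V}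
    {y : ι → V} (hy : IsStageVector F Fd S Shat dt u y) (hr : r ≠ 0) (hK : K ≠ 0)
    (hM : IsUnit (shuOsherMatrix S Shat r K)) :
    y = (fun i ↦ ((shuOsherMatrix S Shat r K)⁻¹ *ᵥ 1) i • u)
      + (r • ((shuOsherMatrix S Shat r K)⁻¹ * S)) • (y + (dt / r) • (F ∘ y))
      + ((r ^ 2 / K ^ 2) • ((shuOsherMatrix S Shat r K)⁻¹ * Shat)) •
        (y + (K * (dt / r)) ^ 2 • (Fd ∘ y)) := by
  set M := shuOsherMatrix S Shat r K with hM_def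
  have hstep : (K * (dt / r)) ^ 2 = dt ^ 2 / (r ^ 2 / K ^ 2) := by field_simp
  have hMy : M • y = (fun _ ↦ u) + (r • S) • (y + (dt / r) • (F ∘ y))
      + ((r ^ 2 / K ^ 2) • Shat) • (y + (K * (dt / r)) ^ 2 • (Fd ∘ y)) := by
    rw [hstep, smul_matrix_smul_add_div_smul hr, smul_matrix_smul_add_div_smul (by positivity),
      hM_def, shuOsherMatrix, add_smul, add_smul, one_smul]
    nth_rw 1 [hy]
    abel
  have hconst : M⁻¹ • (fun _ : ι ↦ u) = fun i ↦ (M⁻¹ *ᵥ 1) i • u := by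
    ext i
    simp [mulVec, dotProduct, Finset.sum_smul]
  calc y = (M⁻¹ * M) • y := by
        rw [nonsing_inv_mul M ((isUnit_iff_isUnit_det M).mp hM), one_smul]
    _ = _ := by
        rw [mul_smul, hMy, smul_add, smul_add, hconst, ← mul_smul, ← mul_smul, mul_smul_comm,
          mul_smul_comm]

end ShuOsher

section StrongStability

open scoped Matrix.Module

variable {ι 𝕜 V : Type*} [Fintype ι] [DecidableEq ι] [Field 𝕜] [LinearOrder 𝕜]
  [IsStrictOrderedRing 𝕜] [AddCommGroup V] [Module 𝕜 V]

theorem map_le_of_eq_shuOsher_form {φ : V → 𝕜} (hφ : ConvexOn 𝕜 Set.univ φ) {P Q : Matrix ι ι 𝕜}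
    (hP : ∀ i j, 0 ≤ P i j) (hQ : ∀ i j, 0 ≤ Q i j) (hunit : IsUnit (1 - P - Q))
    (hR : ∀ i, 0 ≤ ((1 - P - Q) *ᵥ 1) i) {u : V} {y a b : ι → V}
    (hy : y = (fun i ↦ ((1 - P - Q) *ᵥ 1) i • u) + P • a + Q • b)
    (ha : ∀ j, φ (a j) ≤ φ (y j)) (hb : ∀ j, φ (b j) ≤ φ (y j)) (i : ι) : φ (y i) ≤ φ u := by
  have hmulVec : ∀ (v : ι → 𝕜) i,
      ((1 - P - Q) *ᵥ v) i = v i - ∑ j, P i j * v j - ∑ j, Q i j * v j := fun v i ↦ by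
    rw [sub_mulVec, sub_mulVec, one_mulVec]
    rfl
  have hweights : ∀ i, ((1 - P - Q) *ᵥ 1) i + ∑ j, P i j + ∑ j, Q i j = 1 := fun i ↦ by
    rw [hmulVec]
    simp only [Pi.one_apply, mul_one]
    ring
  have hconvex : ∀ i, φ (y i) ≤
      ((1 - P - Q) *ᵥ 1) i * φ u + ∑ j, P i j * φ (y j) + ∑ j, Q i j * φ (y j) := fun i ↦
    calc φ (y i) = φ (((1 - P - Q) *ᵥ 1) i • u + ∑ j, P i j • a j + ∑ j, Q i j • b j) :=
          congrArg φ (congrFun hy i)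
      _ ≤ ((1 - P - Q) *ᵥ 1) i * φ u + ∑ j, P i j * φ (a j) + ∑ j, Q i j * φ (b j) :=
          convexOn_map_smul_add_sum_add_sum_le hφ (hR i) (hP i) (hQ i) (hweights i) u a b
      _ ≤ _ := by
          gcongr with j _ j _
          exacts [hP i j, ha j, hQ i j, hb j]
  have hdefect : ∀ i, ((1 - P - Q) *ᵥ fun j ↦ φ (y j) - φ u) i ≤ 0 := fun i ↦ by
    have hw := congrArg (· * φ u) (hweights i)
    simp only [add_mul, Finset.sum_mul, one_mul] at hw
    simp only [hmulVec, mul_sub, Finset.sum_sub_distrib]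
    linarith [hconvex i]
  refine sub_nonpos.mp (nonpos_of_mulVec_nonpos hunit (fun i j hij ↦ ?_) hR hdefect i)
  rw [Matrix.sub_apply, Matrix.sub_apply, one_apply_ne hij]
  linarith [hP i j, hQ i j]

/-- The forward Euler condition, with a functional `φ` in place of the norm. -/
def ForwardEulerCondition (φ : V → 𝕜) (F : V → V) (dtFE : 𝕜) : Prop :=
  ∀ v : V, ∀ t : 𝕜, 0 ≤ t → t ≤ dtFE → φ (v + t • F v) ≤ φ v

/-- The second derivative condition with constant `K`, with a functional `φ` in place of the
norm. -/
def SecondDerivativeCondition (φ : V → 𝕜) (Fd : V → V) (dtFE K : 𝕜) : Prop :=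
  ∀ v : V, ∀ t : 𝕜, 0 ≤ t → t ≤ K * dtFE → φ (v + t ^ 2 • Fd v) ≤ φ v

theorem multistage_two_derivative_ssp_general {φ : V → 𝕜} (hφ : ConvexOn 𝕜 Set.univ φ)
    {F Fd : V → V} {dtFE K : 𝕜} (hK : 0 < K) (hFE : ForwardEulerCondition φ F dtFE)
    (hSD : SecondDerivativeCondition φ Fd dtFE K) {S Shat : Matrix ι ι 𝕜} {r : 𝕜} (hr : 0 < r)
    (hM : IsUnit (shuOsherMatrix S Shat r K))
    (hRe : ∀ i, 0 ≤ ((shuOsherMatrix S Shat r K)⁻¹ *ᵥ 1) i)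
    (hP : ∀ i j, 0 ≤ (r • ((shuOsherMatrix S Shat r K)⁻¹ * S)) i j)
    (hQ : ∀ i j, 0 ≤ ((r ^ 2 / K ^ 2) • ((shuOsherMatrix S Shat r K)⁻¹ * Shat)) i j)
    {u : V} {dt : 𝕜} (hdt0 : 0 ≤ dt) (hdt : dt ≤ r * dtFE) {y : ι → V}
    (hy : IsStageVector F Fd S Shat dt u y) (i : ι) : φ (y i) ≤ φ u := by
  have hinv := inv_shuOsherMatrix_eq_one_sub hM
  have hstep_nonneg : 0 ≤ dt / r := by positivity
  have hstep_le : dt / r ≤ dtFE := (div_le_iff₀' hr).mpr hdt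
  refine map_le_of_eq_shuOsher_form hφ hP hQ ?_ ?_
    (hinv ▸ hy.eq_shuOsher_form hr.ne' hK.ne' hM)
    (fun j ↦ hFE (y j) (dt / r) hstep_nonneg hstep_le)
    (fun j ↦ hSD (y j) (K * (dt / r)) (by positivity) (by gcongr)) i
  · exact hinv ▸ isUnit_nonsing_inv_iff.mpr hM
  · exact hinv ▸ hRe

end StrongStability

/-- Sufficient SSP conditions for a multistage two-derivative method
in matrix form: if the Shu–Osher arrays `M⁻¹·e`, `r·M⁻¹·S`, `(r²/K²)·M⁻¹·Ŝ`
(with `M = I + r·S + (r²/K²)·Ŝ`) are entrywise nonnegative, then every stage of the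
method is bounded in norm by `‖u‖` for `0 ≤ Δt ≤ r·Δt_FE`. -/
theorem multistage_two_derivative_ssp {V : Type*} [NormedAddCommGroup V] [NormedSpace ℝ V]
    (F Fd : V → V) (dtFE K : ℝ) (hdtFE : 0 < dtFE) (hK : 0 < K)
    (hFE : ∀ v : V, ∀ t : ℝ, 0 ≤ t → t ≤ dtFE → ‖v + t • F v‖ ≤ ‖v‖)
    (hSD : ∀ v : V, ∀ t : ℝ, 0 ≤ t → t ≤ K * dtFE → ‖v + t ^ 2 • Fd v‖ ≤ ‖v‖)
    (n : ℕ) (hn : 1 ≤ n)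
    (S Shat : Matrix (Fin n) (Fin n) ℝ)
    (hS : ∀ i j : Fin n, i ≤ j → S i j = 0)
    (hShat : ∀ i j : Fin n, i ≤ j → Shat i j = 0)
    (r : ℝ) (hr : 0 < r)
    (M : Matrix (Fin n) (Fin n) ℝ)
    (hM : M = 1 + r • S + (r ^ 2 / K ^ 2) • Shat)
    (hRe : ∀ i : Fin n, 0 ≤ M⁻¹.mulVec (fun _ => (1 : ℝ)) i)
    (hP : ∀ i j : Fin n, 0 ≤ (r • (M⁻¹ * S)) i j)
    (hQ : ∀ i j : Fin n, 0 ≤ ((r ^ 2 / K ^ 2) • (M⁻¹ * Shat)) i j)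
    (u : V) (dt : ℝ) (hdt0 : 0 ≤ dt) (hdt : dt ≤ r * dtFE)
    (y : Fin n → V)
    (hy : ∀ i : Fin n,
      y i = u + dt • (∑ j, S i j • F (y j)) + dt ^ 2 • (∑ j, Shat i j • Fd (y j))) :
    ∀ i : Fin n, ‖y i‖ ≤ ‖u‖ := by
  subst hM
  exact multistage_two_derivative_ssp_general convexOn_univ_norm hK hFE hSD hr
    (isUnit_shuOsherMatrix_of_strictly_lower hS hShat r K) hRe hP hQ hdt0 hdt (funext hy)
end

section
/- Let V be a real normed vector space, F : V → V and Δt_FE > 0, and assume F satisfies the forward Euler condition. Let s ≥ 1 and let α_{ij}, β_{ij} (1 ≤ i ≤ s, 0 ≤ j ≤ i−1) be nonnegative real numbers with ∑_{j=0}^{i−1} α_{ij} = 1 for every i. Let Δt ≥ 0 satisfy β_{ij}·Δt ≤ α_{ij}·Δt_FE for all i, j (in particular this holds for all Δt ≥ 0 when β_{ij} = 0). Define stages y^{(0)} = u and y^{(i)} = ∑_{j=0}^{i−1} ( α_{ij}·y^{(j)} + Δt·β_{ij}·F(y^{(j)}) ) for i = 1, …, s. Then ‖y^{(i)}‖ ≤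 ‖u‖ for every i = 0, 1, …, s; in particular the update u^{n+1} = y^{(s)} satisfies ‖u^{n+1}‖ ≤ ‖u‖. -/
/-!
A Shu–Osher stage is a convex combination of forward Euler steps: if `α > 0`, then
`α • v + b • F v` is `α` times the forward Euler step of size `b / α` from `v`. Hence a convex set
that forward Euler steps do not leave is not left by the stages either. The forward Euler condition
makes every closed ball around `0` such a set.
-/

/-- Invariance of `C` under the forward Euler method for `dv/dt = F v` with step sizes up to `h`.
The strong stability of forward Euler with respect to a functional is the invariance of the
sublevel sets of that functional. -/
def ForwardEulerInvariant {𝕜 V : Type*} [Zero 𝕜] [Preorder 𝕜] [Add V] [SMul 𝕜 V]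
    (F : V → V) (h : 𝕜) (C : Set V) : Prop :=
  ∀ v ∈ C, ∀ t ∈ Set.Icc (0 : 𝕜) h, v + t • F v ∈ C

theorem forwardEulerInvariant_closedBall_zero {𝕜 V : Type*} [Zero 𝕜] [Preorder 𝕜]
    [SeminormedAddGroup V] [SMul 𝕜 V] {F : V → V} {h : 𝕜}
    (hF : ∀ v : V, ∀ t : 𝕜, 0 ≤ t → t ≤ h → ‖v + t • F v‖ ≤ ‖v‖) (r : ℝ) :
    ForwardEulerInvariant F h (Metric.closedBall 0 r) := by
  intro v hv t ht
  rw [mem_closedBall_zero_iff] at hv ⊢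
  exact (hF v t ht.1 ht.2).trans hv

section ConvexInvariance

variable {𝕜 V : Type*} [Field 𝕜] [LinearOrder 𝕜] [IsStrictOrderedRing 𝕜]
  [AddCommGroup V] [Module 𝕜 V] {F : V → V} {h : 𝕜} {C : Set V}

namespace ForwardEulerInvariant

theorem exists_mem_smul_eq (hF : ForwardEulerInvariant F h C) {a b : 𝕜} (ha : 0 ≤ a) (hb : 0 ≤ b)
    (hab : b ≤ a * h) {v : V} (hv : v ∈ C) : ∃ z ∈ C, a • z = a • v + b • F v := by
  rcases ha.eq_or_lt with rfl | ha_pos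
  · have hb_zero : b = 0 := le_antisymm (by simpa using hab) hb
    exact ⟨v, hv, by simp [hb_zero]⟩
  · have hstep : b / a ∈ Set.Icc 0 h := ⟨div_nonneg hb ha, (div_le_iff₀' ha_pos).2 hab⟩
    refine ⟨v + (b / a) • F v, hF v hv _ hstep, ?_⟩
    rw [smul_add, smul_smul, mul_div_cancel₀ b ha_pos.ne']

theorem sum_smul_add_smul_mem (hF : ForwardEulerInvariant F h C) (hC : Convex 𝕜 C) {ι : Type*}
    {s : Finset ι} {a b : ι → 𝕜} {v : ι → V} (ha : ∀ j ∈ s, 0 ≤ a j) (hb : ∀ j ∈ s, 0 ≤ b j)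
    (hab : ∀ j ∈ s, b j ≤ a j * h) (hsum : ∑ j ∈ s, a j = 1) (hv : ∀ j ∈ s, v j ∈ C) :
    ∑ j ∈ s, (a j • v j + b j • F (v j)) ∈ C := by
  choose! z hz_mem hz_eq using fun j hj =>
    hF.exists_mem_smul_eq (ha j hj) (hb j hj) (hab j hj) (hv j hj)
  rw [← Finset.sum_congr rfl hz_eq]
  exact hC.sum_mem ha hsum hz_mem

end ForwardEulerInvariant

theorem shu_osher_rk_ssp_general (hF : ForwardEulerInvariant F h C) (hC : Convex 𝕜 C)
    {s : ℕ} {α β : ℕ → ℕ → 𝕜}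
    (hα : ∀ i j : ℕ, 1 ≤ i → i ≤ s → j < i → 0 ≤ α i j)
    (hβ : ∀ i j : ℕ, 1 ≤ i → i ≤ s → j < i → 0 ≤ β i j)
    (hsum : ∀ i : ℕ, 1 ≤ i → i ≤ s → ∑ j ∈ Finset.range i, α i j = 1)
    {dt : 𝕜} (hdt0 : 0 ≤ dt)
    (hdt : ∀ i j : ℕ, 1 ≤ i → i ≤ s → j < i → β i j * dt ≤ α i j * h)
    {y : ℕ → V} (hy0 : y 0 ∈ C)
    (hy : ∀ i : ℕ, 1 ≤ i → i ≤ s →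
      y i = ∑ j ∈ Finset.range i, (α i j • y j + (dt * β i j) • F (y j)))
    (i : ℕ) (hi : i ≤ s) : y i ∈ C := by
  induction i using Nat.strong_induction_on with
  | _ i ih =>
    rcases Nat.eq_zero_or_pos i with rfl | hi_pos
    · exact hy0
    · rw [hy i hi_pos hi]
      have hlt : ∀ j ∈ Finset.range i, j < i := fun j => Finset.mem_range.1
      refine hF.sum_smul_add_smul_mem hC (fun j hj => hα i j hi_pos hi (hlt j hj))
        (fun j hj => mul_nonneg hdt0 (hβ i j hi_pos hi (hlt j hj)))
        (fun j hj => ?_) (hsum i hi_pos hi)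
        (fun j hj => ih j (hlt j hj) ((hlt j hj).le.trans hi))
      rw [mul_comm]
      exact hdt i j hi_pos hi (hlt j hj)

end ConvexInvariance

/-- An explicit Runge–Kutta method in Shu–Osher form with nonnegative
coefficients `α_{ij}, β_{ij}`, consistency `∑_j α_{ij} = 1`, and time step satisfying
`β_{ij}·Δt ≤ α_{ij}·Δt_FE`, preserves the strong stability of the forward Euler method:
every stage satisfies `‖y⁽ⁱ⁾‖ ≤ ‖u‖`. -/
theorem shu_osher_rk_ssp {V : Type*} [NormedAddCommGroup V] [NormedSpace ℝ V]
    (F : V → V) (dtFE : ℝ) (hdtFE : 0 < dtFE)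
    (hFE : ∀ v : V, ∀ t : ℝ, 0 ≤ t → t ≤ dtFE → ‖v + t • F v‖ ≤ ‖v‖)
    (s : ℕ) (hs : 1 ≤ s) (α β : ℕ → ℕ → ℝ)
    (hα : ∀ i j : ℕ, 1 ≤ i → i ≤ s → j < i → 0 ≤ α i j)
    (hβ : ∀ i j : ℕ, 1 ≤ i → i ≤ s → j < i → 0 ≤ β i j)
    (hsum : ∀ i : ℕ, 1 ≤ i → i ≤ s → ∑ j ∈ Finset.range i, α i j = 1)
    (dt : ℝ) (hdt0 : 0 ≤ dt)
    (hdt : ∀ i j : ℕ, 1 ≤ i → i ≤ s → j < i → β i j * dt ≤ α i j * dtFE)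
    (u : V) (y : ℕ → V) (hy0 : y 0 = u)
    (hy : ∀ i : ℕ, 1 ≤ i → i ≤ s →
      y i = ∑ j ∈ Finset.range i, (α i j • y j + (dt * β i j) • F (y j))) :
    ∀ i : ℕ, i ≤ s → ‖y i‖ ≤ ‖u‖ := by
  have hF := forwardEulerInvariant_closedBall_zero hFE ‖u‖
  have hy0_mem : y 0 ∈ Metric.closedBall 0 ‖u‖ := mem_closedBall_zero_iff.2 (hy0 ▸ le_rfl)
  exact fun i hi => mem_closedBall_zero_iff.1 <|
    shu_osher_rk_ssp_general hF (convex_closedBall 0 ‖u‖) hα hβ hsum hdt0 hdt hy0_mem hy i hi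
end

section
/- Let u : ℤ → ℝ and let 0 ≤ λ ≤ 1. Define the first-order upwind forward Euler update u'_j = u_j + λ·(u_{j+1} − u_j) for all j ∈ ℤ. Then ‖u'‖_TV ≤ ‖u‖_TV, i.e., the scheme is total variation diminishing. -/
/-!
Total variation is a shift-invariant extended seminorm on sequences. For `0 ≤ λ ≤ 1` the
update `(1 − λ) u_j + λ u_{j+1}` is a convex combination of `u` and its shift, which have the
same total variation.
-/

open scoped ENNReal

section TotalVariation

variable {X E : Type*} [PseudoEMetricSpace X] [SeminormedAddCommGroup E]

/-- The total variation `‖u‖_TV` of a doubly infinite sequence. It takes values in `[0, ∞]`, so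
that sequences of unbounded variation are covered. -/
noncomputable def totalVariation (u : ℤ → X) : ℝ≥0∞ :=
  ∑' j : ℤ, edist (u (j + 1)) (u j)

theorem totalVariation_comp_add_right (u : ℤ → X) (k : ℤ) :
    totalVariation (fun j => u (j + k)) = totalVariation u := by
  simp only [totalVariation, add_right_comm _ 1 k]
  exact (Equiv.addRight k).tsum_eq fun j => edist (u (j + 1)) (u j)

theorem totalVariation_add_le (u v : ℤ → E) :
    totalVariation (u + v) ≤ totalVariation u + totalVariation v := by
  rw [totalVariation, totalVariation, totalVariation, ← ENNReal.tsum_add]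
  exact ENNReal.tsum_le_tsum fun _ => edist_add_add_le _ _ _ _

theorem totalVariation_const_smul {R : Type*} [SeminormedRing R] [Module R E] [NormSMulClass R E]
    (c : R) (u : ℤ → E) : totalVariation (c • u) = ‖c‖ₑ * totalVariation u := by
  simp only [totalVariation, Pi.smul_apply, edist_eq_enorm_sub, ← smul_sub, enorm_smul,
    ENNReal.tsum_mul_left]

/-- The two wind directions are `k = 1` and `k = -1`. -/
theorem upwind_forward_euler_tvd_general [NormedSpace ℝ E] (u u' : ℤ → E) (k : ℤ)
    {lam : ℝ} (h0 : 0 ≤ lam) (h1 : lam ≤ 1)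
    (hu' : ∀ j, u' j = u j + lam • (u (j + k) - u j)) :
    totalVariation u' ≤ totalVariation u := by
  have update_eq : u' = (1 - lam) • u + lam • fun j => u (j + k) := by
    ext j
    simp only [hu', Pi.add_apply, Pi.smul_apply]
    module
  have weights_add : ‖1 - lam‖ₑ + ‖lam‖ₑ = 1 := by
    rw [Real.enorm_of_nonneg (sub_nonneg.mpr h1), Real.enorm_of_nonneg h0,
      ← ENNReal.ofReal_add (sub_nonneg.mpr h1) h0, sub_add_cancel, ENNReal.ofReal_one]
  calc totalVariation u'
      = totalVariation ((1 - lam) • u + lam • fun j => u (j + k)) := by rw [update_eq]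
    _ ≤ totalVariation ((1 - lam) • u) + totalVariation (lam • fun j => u (j + k)) :=
        totalVariation_add_le _ _
    _ = (‖1 - lam‖ₑ + ‖lam‖ₑ) * totalVariation u := by
        rw [totalVariation_const_smul, totalVariation_const_smul, totalVariation_comp_add_right,
          add_mul]
    _ = totalVariation u := by rw [weights_add, one_mul]

end TotalVariation

/-- The first-order upwind forward Euler scheme
`u'_j = u_j + λ·(u_{j+1} − u_j)` is total variation diminishing for `0 ≤ λ ≤ 1`. -/
theorem upwind_forward_euler_tvd (u u' : ℤ → ℝ) (lam : ℝ)
    (h0 : 0 ≤ lam) (h1 : lam ≤ 1)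
    (hu' : ∀ j : ℤ, u' j = u j + lam * (u (j + 1) - u j)) :
    (∑' j : ℤ, ENNReal.ofReal |u' (j + 1) - u' j|) ≤
      ∑' j : ℤ, ENNReal.ofReal |u (j + 1) - u j| := by
  simpa only [totalVariation, edist_dist, Real.dist_eq] using
    upwind_forward_euler_tvd_general u u' 1 h0 h1 hu'
end

section
/- Let a, â, b₁, b₂, b̂₁, b̂₂ be real numbers satisfying the order conditions through order four of an explicit two-stage two-derivative Runge–Kutta method: b₁ + b₂ = 1; a·b₂ + b̂₁ + b̂₂ = 1/2; a²·b₂ + 2a·b̂₂ = 1/3; â·b₂ + a·b̂₂ = 1/6; a³·b₂ + 3a²·b̂₂ = 1/4; a·â·b₂ + a²·b̂₂ + â·b̂₂ = 1/8; a²·b̂₂ = 1/12; â·b̂₂ = 1/24. Then necessarily a = 1/2, â = 1/8, b₁ = 1, b₂ = 0, b̂₁ = 1/6 and b̂₂ = 1/3; that is, the two-stage fourth-order two-derivative method u* = u + (Δt/2)F(u) + (Δt²/8)Ḟ(u), u^{n+1} = u + ΔtF(u) + (Δt²/6)(Ḟ(u) + 2Ḟ(u*)) is the unique such method. -/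
/-!
The elementary differential `F'F''(F, F)` is produced by `Ḟ(u*)` alone, which gives
`a² b̂₂ = 1/12`; removing three times this from the condition of `F'''(F, F, F)` leaves
`a³ b₂ = 0`, so the second stage enters only through `Ḟ(u*)`. The method is then `u + Δt F(u)` plus
a quadrature of `Δt² ∫₀¹ (1 - t) Ḟ dt` with nodes `0` and `a`. The node `a` and its weight `b̂₂` are
determined by the moments `∫₀¹ (1 - t) t dt = 1/6` and `∫₀¹ (1 - t) t² dt = 1/12`, and the remaining
coefficients follow linearly.
-/

section Quadrature

lemma stage_weight_eq_zero {R : Type*} [CommRing R] [NoZeroDivisors R] {c b w m : R} (hm : m ≠ 0)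
    (h_cube : c ^ 3 * b + 3 * c ^ 2 * w = 3 * m) (h_sq : c ^ 2 * w = m) : b = 0 := by
  have hc : c ^ 2 ≠ 0 := left_ne_zero_of_mul (h_sq.trans_ne hm)
  have hcb : c ^ 3 * b = 0 := by linear_combination h_cube - 3 * h_sq
  exact (mul_eq_zero.mp hcb).resolve_left (pow_ne_zero 3 (ne_zero_pow two_ne_zero hc))

variable {K : Type*} [Field K] {c w m₁ m₂ : K}

lemma node_eq_div_of_moments (hm₁ : m₁ ≠ 0) (h₁ : c * w = m₁) (h₂ : c ^ 2 * w = m₂) :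
    c = m₂ / m₁ := by
  rw [eq_div_iff hm₁]
  linear_combination h₂ - c * h₁

lemma weight_eq_div_of_moments (hm₂ : m₂ ≠ 0) (h₁ : c * w = m₁) (h₂ : c ^ 2 * w = m₂) :
    w = m₁ ^ 2 / m₂ := by
  rw [eq_div_iff hm₂, ← h₁, ← h₂]
  ring

end Quadrature

section OrderConditions

variable {K : Type*} [Field K] [NeZero (2 : K)] [NeZero (3 : K)] {a ahat b1 b2 bh1 bh2 : K}

lemma quadrature_conditions_unique (h_square : a ^ 2 * b2 + 2 * a * bh2 = 1 / 3)
    (h_cube : a ^ 3 * b2 + 3 * a ^ 2 * bh2 = 1 / 4) (h_moment₂ : a ^ 2 * bh2 = 1 / 12) :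
    a = 1 / 2 ∧ b2 = 0 ∧ bh2 = 1 / 3 := by
  have h2 : (2 : K) ≠ 0 := two_ne_zero
  have h3 : (3 : K) ≠ 0 := three_ne_zero
  have h6 : (1 / 6 : K) ≠ 0 := by
    rw [show (6 : K) = 2 * 3 by norm_num]
    exact one_div_ne_zero (mul_ne_zero h2 h3)
  have h12 : (1 / 12 : K) ≠ 0 := by
    rw [show (12 : K) = 2 ^ 2 * 3 by norm_num]
    exact one_div_ne_zero (mul_ne_zero (pow_ne_zero 2 h2) h3)
  have h_quarter : (1 / 4 : K) = 3 * (1 / 12) := by grind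
  have hb2 : b2 = 0 := stage_weight_eq_zero h12 (h_cube.trans h_quarter) h_moment₂
  have h_moment₁ : a * bh2 = 1 / 6 := by
    rw [hb2] at h_square
    grind
  have ha : a = 1 / 12 / (1 / 6) := node_eq_div_of_moments h6 h_moment₁ h_moment₂
  have hbh2 : bh2 = (1 / 6) ^ 2 / (1 / 12) := weight_eq_div_of_moments h12 h_moment₁ h_moment₂
  exact ⟨ha.trans (by grind), hb2, hbh2.trans (by grind)⟩

theorem two_stage_fourth_order_unique_general (h_sum : b1 + b2 = 1)
    (h_linear : a * b2 + bh1 + bh2 = 1 / 2)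
    (h_square : a ^ 2 * b2 + 2 * a * bh2 = 1 / 3)
    (h_cube : a ^ 3 * b2 + 3 * a ^ 2 * bh2 = 1 / 4)
    (h_moment₂ : a ^ 2 * bh2 = 1 / 12)
    (h_hat : ahat * bh2 = 1 / 24) :
    a = 1 / 2 ∧ ahat = 1 / 8 ∧ b1 = 1 ∧ b2 = 0 ∧ bh1 = 1 / 6 ∧ bh2 = 1 / 3 := by
  obtain ⟨rfl, rfl, rfl⟩ := quadrature_conditions_unique h_square h_cube h_moment₂
  have h2 : (2 : K) ≠ 0 := two_ne_zero
  have h3 : (3 : K) ≠ 0 := three_ne_zero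
  have hahat : ahat = 1 / 8 := by grind
  have hb1 : b1 = 1 := by simpa using h_sum
  have hbh1 : bh1 = 1 / 6 := by grind
  exact ⟨rfl, hahat, hb1, rfl, hbh1, rfl⟩

end OrderConditions

/-- Uniqueness of the explicit two-stage fourth-order
two-derivative Runge–Kutta method: the order conditions through order four force
`a = 1/2`, `â = 1/8`, `b₁ = 1`, `b₂ = 0`, `b̂₁ = 1/6`, `b̂₂ = 1/3`. -/
theorem two_stage_fourth_order_unique (a ahat b1 b2 bh1 bh2 : ℝ)
    (h1 : b1 + b2 = 1)
    (h2 : a * b2 + bh1 + bh2 = 1 / 2)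
    (h3 : a ^ 2 * b2 + 2 * a * bh2 = 1 / 3)
    (h4 : ahat * b2 + a * bh2 = 1 / 6)
    (h5 : a ^ 3 * b2 + 3 * a ^ 2 * bh2 = 1 / 4)
    (h6 : a * ahat * b2 + a ^ 2 * bh2 + ahat * bh2 = 1 / 8)
    (h7 : a ^ 2 * bh2 = 1 / 12)
    (h8 : ahat * bh2 = 1 / 24) :
    a = 1 / 2 ∧ ahat = 1 / 8 ∧ b1 = 1 ∧ b2 = 0 ∧ bh1 = 1 / 6 ∧ bh2 = 1 / 3 :=
  two_stage_fourth_order_unique_general h1 h2 h3 h5 h7 h8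
end

section
/- Let a₂₁ be a real number with a₂₁ ∉ {0, 1/2, 3/5}, and define a₃₁ = (3/5 − a₂₁)/(1 − 2a₂₁), â₂₁ = a₂₁²/2, â₃₂ = (1/10)·( (3/5 − a₂₁)²/(a₂₁·(1 − 2a₂₁)³) − (3/5 − a₂₁)/(1 − 2a₂₁)² ), â₃₁ = (1/2)·(3/5 − a₂₁)²/(1 − 2a₂₁)² − â₃₂, b̂₂ = (2a₃₁ − 1)/(12·a₂₁·(a₃₁ − a₂₁)), b̂₃ = (1 − 2a₂₁)/(12·a₃₁·(a₃₁ − a₂₁)), and b̂₁ = 1/2 − b̂₂ − b̂₃ (note a₃₁ ≠ a₂₁ automatically since 2a₂₁² − 2a₂₁ + 3/5 has no real root). Then the explicit three-stage two-derivative method with coefficient matrices A (entries A₂₁ = a₂₁, A₃₁ = a₃₁, A₃₂ = 0, all others zero) and Â (entries Â₂₁ = â₂₁, Â₃₁ = â₃₁, Â₃₂ = â₃₂, all others zero), weights b = (1, 0, 0) and b̂ = (b̂₁, b̂₂, b̂₃), satisfies all order conditions of Table 1 through order five; in particular, explicit three-stage two-derivative methods of order five exist, breaking the order-four barrier of explicit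 SSP Runge–Kutta methods. -/
/-!
When `f` is evaluated only at the first stage, `b = e₁`, `c₁ = ĉ₁ = 0` and `A = c e₁ᵀ`, so every
term involving `b` or `A` drops out of the order conditions, apart from `bᵀe = 1` and `c = A e`.
If moreover `ĉ = c² / 2`, then order five amounts to
`b̂ᵀe = 1/2`, `b̂ᵀc = 1/6`, `b̂ᵀc² = 1/12`, `b̂ᵀc³ = 1/20` and `b̂ᵀÂc = 1/120`.
With three stages, the moments of orders one and two determine `b̂₂` and `b̂₃` from the nodes; the
third moment then becomes `a₃₁ (1 - 2 a₂₁) = 3/5 - a₂₁`, and the last identity,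
`b̂₃ â₃₂ a₂₁ = 1/120`, is solved by `â₃₂ = a₃₁ (a₃₁ - a₂₁) / (10 a₂₁ (1 - 2 a₂₁))`.
-/

open scoped Matrix

/-- The coefficients of a two-derivative Runge–Kutta method with stages indexed by `ι`: `A` and `b`
weight the values of the vector field, `Ahat` and `bhat` those of its derivative along the flow. -/
structure TwoDerivativeMethod (ι K : Type*) where
  A : Matrix ι ι K
  Ahat : Matrix ι ι K
  b : ι → K
  bhat : ι → K

namespace TwoDerivativeMethod

section OrderConditions

variable {ι K : Type*} [Fintype ι] [Field K] (M : TwoDerivativeMethod ι K)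

/-- The abscissae `c = A e`. -/
def c : ι → K := M.A *ᵥ 1

/-- The second-derivative row sums `ĉ = Â e`. -/
def chat : ι → K := M.Ahat *ᵥ 1

/-- The order condition at `p = 1`. -/
def OrderOne : Prop := ∑ i, M.b i = 1

/-- The order condition at `p = 2`. -/
def OrderTwo : Prop := M.b ⬝ᵥ M.c + ∑ i, M.bhat i = 1 / 2

/-- The order conditions at `p = 3`, without those of lower order. -/
def OrderThree : Prop :=
  (M.b ⬝ᵥ M.c ^ 2 + 2 * M.bhat ⬝ᵥ M.c = 1 / 3)
  ∧ (M.b ⬝ᵥ M.A *ᵥ M.c + M.b ⬝ᵥ M.chat + M.bhat ⬝ᵥ M.c = 1 / 6)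

/-- The order conditions at `p = 4`, without those of lower order. -/
def OrderFour : Prop :=
  (M.b ⬝ᵥ M.c ^ 3 + 3 * M.bhat ⬝ᵥ M.c ^ 2 = 1 / 4)
  ∧ ((M.b * M.c) ⬝ᵥ M.A *ᵥ M.c + (M.b * M.c) ⬝ᵥ M.chat + M.bhat ⬝ᵥ M.c ^ 2
      + M.bhat ⬝ᵥ M.A *ᵥ M.c + M.bhat ⬝ᵥ M.chat = 1 / 8)
  ∧ (M.b ⬝ᵥ M.A *ᵥ M.c ^ 2 + 2 * M.b ⬝ᵥ M.Ahat *ᵥ M.c + M.bhat ⬝ᵥ M.c ^ 2 = 1 / 12)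
  ∧ (M.b ⬝ᵥ M.A *ᵥ M.A *ᵥ M.c + M.b ⬝ᵥ M.A *ᵥ M.chat + M.b ⬝ᵥ M.Ahat *ᵥ M.c
      + M.bhat ⬝ᵥ M.A *ᵥ M.c + M.bhat ⬝ᵥ M.chat = 1 / 24)

/-- The order conditions at `p = 5`, without those of lower order. -/
def OrderFive : Prop :=
  (M.b ⬝ᵥ M.c ^ 4 + 4 * M.bhat ⬝ᵥ M.c ^ 3 = 1 / 5)
  ∧ ((M.b * M.c ^ 2) ⬝ᵥ M.A *ᵥ M.c + (M.b * M.c ^ 2) ⬝ᵥ M.chat + M.bhat ⬝ᵥ M.c ^ 3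
      + 2 * (M.bhat * M.c) ⬝ᵥ M.A *ᵥ M.c + 2 * (M.bhat * M.c) ⬝ᵥ M.chat = 1 / 10)
  ∧ ((M.b * M.c) ⬝ᵥ M.A *ᵥ M.c ^ 2 + 2 * (M.b * M.c) ⬝ᵥ M.Ahat *ᵥ M.c + M.bhat ⬝ᵥ M.c ^ 3
      + M.bhat ⬝ᵥ M.A *ᵥ M.c ^ 2 + 2 * M.bhat ⬝ᵥ M.Ahat *ᵥ M.c = 1 / 15)
  ∧ ((M.b * M.c) ⬝ᵥ M.A *ᵥ M.A *ᵥ M.c + (M.b * M.c) ⬝ᵥ M.A *ᵥ M.chat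
      + (M.b * M.c) ⬝ᵥ M.Ahat *ᵥ M.c + (M.bhat * M.c) ⬝ᵥ M.A *ᵥ M.c
      + (M.bhat * M.c) ⬝ᵥ M.chat + M.bhat ⬝ᵥ M.A *ᵥ M.A *ᵥ M.c
      + M.bhat ⬝ᵥ M.A *ᵥ M.chat + M.bhat ⬝ᵥ M.Ahat *ᵥ M.c = 1 / 30)
  ∧ ((M.b * M.A *ᵥ M.c) ⬝ᵥ M.A *ᵥ M.c + 2 * (M.b * M.chat) ⬝ᵥ M.A *ᵥ M.c
      + M.b ⬝ᵥ M.chat ^ 2 + 2 * (M.bhat * M.c) ⬝ᵥ M.A *ᵥ M.c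
      + 2 * (M.bhat * M.c) ⬝ᵥ M.chat = 1 / 20)
  ∧ (M.b ⬝ᵥ M.A *ᵥ M.c ^ 3 + 3 * M.b ⬝ᵥ M.Ahat *ᵥ M.c ^ 2 + M.bhat ⬝ᵥ M.c ^ 3 = 1 / 20)
  ∧ (M.b ⬝ᵥ M.A *ᵥ (M.c * M.A *ᵥ M.c) + M.b ⬝ᵥ M.A *ᵥ (M.c * M.chat)
      + M.b ⬝ᵥ M.Ahat *ᵥ M.c ^ 2 + M.b ⬝ᵥ M.Ahat *ᵥ M.A *ᵥ M.c + M.b ⬝ᵥ M.Ahat *ᵥ M.chat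
      + (M.bhat * M.c) ⬝ᵥ M.A *ᵥ M.c + (M.bhat * M.c) ⬝ᵥ M.chat = 1 / 40)
  ∧ (M.b ⬝ᵥ M.A *ᵥ M.A *ᵥ M.c ^ 2 + 2 * M.b ⬝ᵥ M.A *ᵥ M.Ahat *ᵥ M.c
      + M.b ⬝ᵥ M.Ahat *ᵥ M.c ^ 2 + M.bhat ⬝ᵥ M.A *ᵥ M.c ^ 2
      + 2 * M.bhat ⬝ᵥ M.Ahat *ᵥ M.c = 1 / 60)
  ∧ (M.b ⬝ᵥ M.A *ᵥ M.A *ᵥ M.A *ᵥ M.c + M.b ⬝ᵥ M.A *ᵥ M.A *ᵥ M.chat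
      + M.b ⬝ᵥ M.A *ᵥ M.Ahat *ᵥ M.c + M.b ⬝ᵥ M.Ahat *ᵥ M.A *ᵥ M.c
      + M.b ⬝ᵥ M.Ahat *ᵥ M.chat + M.bhat ⬝ᵥ M.A *ᵥ M.A *ᵥ M.c
      + M.bhat ⬝ᵥ M.A *ᵥ M.chat + M.bhat ⬝ᵥ M.Ahat *ᵥ M.c = 1 / 120)

/-- All order conditions through order five. -/
def SatisfiesOrderFive : Prop :=
  M.OrderOne ∧ M.OrderTwo ∧ M.OrderThree ∧ M.OrderFour ∧ M.OrderFive

end OrderConditions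

section Special

variable {ι K : Type*} [Fintype ι] [DecidableEq ι] [Field K]
  {M : TwoDerivativeMethod ι K} {i₀ : ι}

/-- The special methods of Chan and Tsai, which evaluate the vector field only once per step, at an
explicit first stage `i₀`. As `M.c` is the vector of row sums of `M.A`, the equation `A_eq` says
that the columns of `M.A` other than `i₀` vanish. The other rows of `M.Ahat` are arbitrary. -/
structure IsSpecial (M : TwoDerivativeMethod ι K) (i₀ : ι) : Prop where
  A_eq : M.A = Matrix.vecMulVec M.c (Pi.single i₀ 1)
  c_self : M.c i₀ = 0
  Ahat_row : M.Ahat i₀ = 0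
  b_eq : M.b = Pi.single i₀ 1

namespace IsSpecial

theorem A_mulVec (h : M.IsSpecial i₀) (v : ι → K) : M.A *ᵥ v = v i₀ • M.c := by
  rw [h.A_eq, Matrix.vecMulVec_mulVec, single_one_dotProduct, op_smul_eq_smul]

theorem Ahat_mulVec_self (h : M.IsSpecial i₀) (v : ι → K) : (M.Ahat *ᵥ v) i₀ = 0 := by
  rw [Matrix.mulVec, h.Ahat_row, zero_dotProduct]

theorem chat_self (h : M.IsSpecial i₀) : M.chat i₀ = 0 := h.Ahat_mulVec_self 1

theorem b_dotProduct (h : M.IsSpecial i₀) (v : ι → K) : M.b ⬝ᵥ v = v i₀ := by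
  rw [h.b_eq, single_one_dotProduct]

theorem b_mul_dotProduct (h : M.IsSpecial i₀) (v w : ι → K) :
    (M.b * v) ⬝ᵥ w = v i₀ * w i₀ := by
  rw [h.b_eq, ← Pi.single_mul_left, one_mul, single_dotProduct]

theorem orderOne (h : M.IsSpecial i₀) : M.OrderOne := by
  rw [OrderOne, h.b_eq, Finset.sum_pi_single']
  simp

theorem orderTwo_iff (h : M.IsSpecial i₀) : M.OrderTwo ↔ ∑ i, M.bhat i = 1 / 2 := by
  rw [OrderTwo, h.b_dotProduct, h.c_self, zero_add]

variable [CharZero K]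

theorem orderThree_iff (h : M.IsSpecial i₀) : M.OrderThree ↔ M.bhat ⬝ᵥ M.c = 1 / 6 := by
  simp only [OrderThree, h.b_dotProduct, h.A_mulVec, h.c_self, h.chat_self, Pi.pow_apply,
    zero_smul, Pi.zero_apply]
  constructor
  · rintro ⟨-, hc⟩
    linear_combination hc
  · intro hc
    exact ⟨by linear_combination 2 * hc, by linear_combination hc⟩


theorem orderFour_iff (h : M.IsSpecial i₀) (hchat : M.chat = (1 / 2 : K) • M.c ^ 2) :
    M.OrderFour ↔ M.bhat ⬝ᵥ M.c ^ 2 = 1 / 12 := by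
  have bhat_chat : M.bhat ⬝ᵥ M.chat = 1 / 2 * M.bhat ⬝ᵥ M.c ^ 2 := by
    rw [hchat, dotProduct_smul, smul_eq_mul]
  simp only [OrderFour, bhat_chat, h.b_dotProduct, h.b_mul_dotProduct, h.A_mulVec,
    h.Ahat_mulVec_self, h.c_self, h.chat_self, Pi.pow_apply,
    zero_pow two_ne_zero, zero_smul, Pi.zero_apply, dotProduct_zero]
  refine ⟨fun ⟨_, _, hc, _⟩ ↦ by linear_combination hc, fun hc ↦ ⟨?_, ?_, ?_, ?_⟩⟩
  · linear_combination 3 * hc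
  · linear_combination 3 / 2 * hc
  · linear_combination hc
  · linear_combination 1 / 2 * hc

theorem orderFive_iff (h : M.IsSpecial i₀) (hchat : M.chat = (1 / 2 : K) • M.c ^ 2) :
    M.OrderFive ↔ M.bhat ⬝ᵥ M.c ^ 3 = 1 / 20 ∧ M.bhat ⬝ᵥ M.Ahat *ᵥ M.c = 1 / 120 := by
  have bhat_c_chat : (M.bhat * M.c) ⬝ᵥ M.chat = 1 / 2 * M.bhat ⬝ᵥ M.c ^ 3 := by
    rw [hchat, dotProduct_smul, smul_eq_mul]
    simp only [dotProduct, Pi.mul_apply, Pi.pow_apply, mul_assoc, ← pow_succ']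
  simp only [OrderFive, bhat_c_chat, h.b_dotProduct, h.b_mul_dotProduct, h.A_mulVec,
    h.Ahat_mulVec_self, h.c_self, h.chat_self, Pi.pow_apply, Pi.mul_apply,
    zero_pow two_ne_zero, zero_pow three_ne_zero, zero_mul, zero_smul, Pi.zero_apply,
    dotProduct_zero]
  constructor
  · rintro ⟨-, -, -, -, -, hc, -, -, hAhat⟩
    exact ⟨by linear_combination hc, by linear_combination hAhat⟩
  · rintro ⟨hc, hAhat⟩
    refine ⟨?_, ?_, ?_, ?_, ?_, ?_, ?_, ?_, ?_⟩
    · linear_combination 4 * hc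
    · linear_combination 2 * hc
    · linear_combination hc + 2 * hAhat
    · linear_combination 1 / 2 * hc + hAhat
    · linear_combination hc
    · linear_combination hc
    · linear_combination 1 / 2 * hc
    · linear_combination 2 * hAhat
    · linear_combination hAhat

theorem satisfiesOrderFive_iff (h : M.IsSpecial i₀) (hchat : M.chat = (1 / 2 : K) • M.c ^ 2) :
    M.SatisfiesOrderFive ↔ ∑ i, M.bhat i = 1 / 2 ∧ M.bhat ⬝ᵥ M.c = 1 / 6 ∧
      M.bhat ⬝ᵥ M.c ^ 2 = 1 / 12 ∧ M.bhat ⬝ᵥ M.c ^ 3 = 1 / 20 ∧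
      M.bhat ⬝ᵥ M.Ahat *ᵥ M.c = 1 / 120 := by
  rw [SatisfiesOrderFive, h.orderTwo_iff, h.orderThree_iff, h.orderFour_iff hchat,
    h.orderFive_iff hchat, and_iff_right h.orderOne]

end IsSpecial

end Special

section ThreeStage

variable {K : Type*} [Field K]

/-- The explicit special three-stage methods with nodes `0`, `x`, `y` that satisfy `ĉ = c² / 2` and
`b̂ᵀe = 1 / 2`, parameterized further by `α = â₃₂`, `β = b̂₂` and `γ = b̂₃`. -/
def threeStage (x y α β γ : K) : TwoDerivativeMethod (Fin 3) K where
  A := !![0, 0, 0; x, 0, 0; y, 0, 0]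
  Ahat := !![0, 0, 0; x ^ 2 / 2, 0, 0; y ^ 2 / 2 - α, α, 0]
  b := ![1, 0, 0]
  bhat := ![1 / 2 - β - γ, β, γ]

variable (x y α β γ : K)

theorem threeStage_c : (threeStage x y α β γ).c = ![0, x, y] := by
  ext i
  fin_cases i <;> simp [c, threeStage, Matrix.mulVec, dotProduct, Fin.sum_univ_three]

theorem threeStage_chat :
    (threeStage x y α β γ).chat = (1 / 2 : K) • (threeStage x y α β γ).c ^ 2 := by
  rw [threeStage_c]
  ext i
  fin_cases i <;>
    simp [chat, threeStage, Matrix.mulVec, dotProduct, Fin.sum_univ_three, div_eq_inv_mul]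

theorem threeStage_isSpecial : (threeStage x y α β γ).IsSpecial 0 where
  A_eq := by
    rw [threeStage_c]
    ext i j
    fin_cases i <;> fin_cases j <;> simp [threeStage, Matrix.vecMulVec_apply]
  c_self := by rw [threeStage_c]; rfl
  Ahat_row := by ext j; fin_cases j <;> rfl
  b_eq := by ext j; fin_cases j <;> rfl

theorem threeStage_sum_bhat : ∑ i, (threeStage x y α β γ).bhat i = 1 / 2 := by
  simp only [threeStage, Fin.sum_univ_three, Matrix.cons_val]
  ring

theorem threeStage_satisfiesOrderFive_iff [CharZero K] :
    (threeStage x y α β γ).SatisfiesOrderFive ↔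
      β * x + γ * y = 1 / 6 ∧ β * x ^ 2 + γ * y ^ 2 = 1 / 12 ∧
      β * x ^ 3 + γ * y ^ 3 = 1 / 20 ∧ γ * (α * x) = 1 / 120 := by
  rw [(threeStage_isSpecial x y α β γ).satisfiesOrderFive_iff (threeStage_chat x y α β γ),
    and_iff_right (threeStage_sum_bhat x y α β γ), threeStage_c]
  simp [threeStage, Matrix.mulVec, dotProduct, Fin.sum_univ_three]

end ThreeStage

end TwoDerivativeMethod

theorem weights_moment_one {K : Type*} [Field K] [CharZero K] {x y : K}
    (hx : x ≠ 0) (hy : y ≠ 0) (hyx : y ≠ x) :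
    (2 * y - 1) / (12 * x * (y - x)) * x + (1 - 2 * x) / (12 * y * (y - x)) * y = 1 / 6 := by
  have : y - x ≠ 0 := sub_ne_zero.2 hyx
  field_simp
  ring

theorem weights_moment_two {K : Type*} [Field K] [CharZero K] {x y : K} (hyx : y ≠ x) :
    (2 * y - 1) / (12 * x * (y - x)) * x ^ 2 + (1 - 2 * x) / (12 * y * (y - x)) * y ^ 2 =
      1 / 12 := by
  have : y - x ≠ 0 := sub_ne_zero.2 hyx
  field_simp
  ring

/-- Both nodes are roots of `t² - (x + y) t + x y`, so the moments satisfy a linear recurrence. -/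
theorem moment_three_eq {R : Type*} [CommRing R] (x y β γ : R) :
    β * x ^ 3 + γ * y ^ 3 =
      (x + y) * (β * x ^ 2 + γ * y ^ 2) - x * y * (β * x + γ * y) := by
  ring

/-- Equality would make `x` a root of `2 t² - 2 t + 3 / 5`, which has negative discriminant. -/
theorem nodes_ne {F : Type*} [Field F] [LinearOrder F] [IsStrictOrderedRing F] {x y : F}
    (h : y * (1 - 2 * x) = 3 / 5 - x) : y ≠ x := by
  rintro rfl
  nlinarith [sq_nonneg (2 * y - 1)]

open TwoDerivativeMethod in
theorem three_stage_fifth_order_exists_general {K : Type*} [Field K] [CharZero K] {x y α β γ : K}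
    (hx : x ≠ 0) (hx_half : x ≠ 1 / 2) (hx_three_fifths : x ≠ 3 / 5) (hyx : y ≠ x)
    (hy : y = (3 / 5 - x) / (1 - 2 * x))
    (hα : α = (1 / 10) * ((3 / 5 - x) ^ 2 / (x * (1 - 2 * x) ^ 3)
      - (3 / 5 - x) / (1 - 2 * x) ^ 2))
    (hβ : β = (2 * y - 1) / (12 * x * (y - x)))
    (hγ : γ = (1 - 2 * x) / (12 * y * (y - x))) :
    (threeStage x y α β γ).SatisfiesOrderFive := by
  have hd : 1 - 2 * x ≠ 0 := fun h ↦ hx_half (by linear_combination -h / 2)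
  have hy₀ : y ≠ 0 := hy ▸ div_ne_zero (sub_ne_zero.2 hx_three_fifths.symm) hd
  have hnode : y * (1 - 2 * x) = 3 / 5 - x := (eq_div_iff hd).1 hy
  have moment_one : β * x + γ * y = 1 / 6 := hβ ▸ hγ ▸ weights_moment_one hx hy₀ hyx
  have moment_two : β * x ^ 2 + γ * y ^ 2 = 1 / 12 := hβ ▸ hγ ▸ weights_moment_two hyx
  have moment_three : β * x ^ 3 + γ * y ^ 3 = 1 / 20 := by
    rw [moment_three_eq, moment_one, moment_two]
    linear_combination hnode / 12
  have hα' : α = y * (y - x) / (10 * x * (1 - 2 * x)) := by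
    rw [hα, ← hnode]
    field_simp
  have coupling : γ * (α * x) = 1 / 120 := by
    have : y - x ≠ 0 := sub_ne_zero.2 hyx
    rw [hγ, hα']
    field_simp
    norm_num
  exact (threeStage_satisfiesOrderFive_iff x y α β γ).2
    ⟨moment_one, moment_two, moment_three, coupling⟩

/-- The one-parameter family of explicit three-stage two-derivative
methods (parameterized by `a₂₁ ∉ {0, 1/2, 3/5}`) with the listed coefficients
satisfies all order conditions through order five; in particular explicit three-stage
two-derivative methods of order five exist. -/
theorem three_stage_fifth_order_exists (a21 : ℝ)
    (h0 : a21 ≠ 0) (h12 : a21 ≠ 1 / 2) (h35 : a21 ≠ 3 / 5)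
    (a31 ah21 ah31 ah32 bh1 bh2 bh3 : ℝ)
    (ha31 : a31 = (3 / 5 - a21) / (1 - 2 * a21))
    (hah21 : ah21 = a21 ^ 2 / 2)
    (hah32 : ah32 = (1 / 10) * ((3 / 5 - a21) ^ 2 / (a21 * (1 - 2 * a21) ^ 3)
      - (3 / 5 - a21) / (1 - 2 * a21) ^ 2))
    (hah31 : ah31 = (1 / 2) * ((3 / 5 - a21) ^ 2 / (1 - 2 * a21) ^ 2) - ah32)
    (hbh2 : bh2 = (2 * a31 - 1) / (12 * a21 * (a31 - a21)))
    (hbh3 : bh3 = (1 - 2 * a21) / (12 * a31 * (a31 - a21)))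
    (hbh1 : bh1 = 1 / 2 - bh2 - bh3)
    (A Ahat : Matrix (Fin 3) (Fin 3) ℝ) (b bhat c chat : Fin 3 → ℝ)
    (hA : A = !![0, 0, 0; a21, 0, 0; a31, 0, 0])
    (hAhat : Ahat = !![0, 0, 0; ah21, 0, 0; ah31, ah32, 0])
    (hb : b = ![1, 0, 0])
    (hbhat : bhat = ![bh1, bh2, bh3])
    (hc : c = A.mulVec (fun _ => 1))
    (hchat : chat = Ahat.mulVec (fun _ => 1)) :
    -- p = 1
    (∑ i, b i = 1)
    -- p = 2
    ∧ (∑ i, b i * c i + ∑ i, bhat i = 1 / 2)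
    -- p = 3
    ∧ (∑ i, b i * c i ^ 2 + 2 * ∑ i, bhat i * c i = 1 / 3)
    ∧ (∑ i, b i * A.mulVec c i + ∑ i, b i * chat i + ∑ i, bhat i * c i = 1 / 6)
    -- p = 4
    ∧ (∑ i, b i * c i ^ 3 + 3 * ∑ i, bhat i * c i ^ 2 = 1 / 4)
    ∧ (∑ i, b i * c i * A.mulVec c i + ∑ i, b i * c i * chat i
        + ∑ i, bhat i * c i ^ 2 + ∑ i, bhat i * A.mulVec c i
        + ∑ i, bhat i * chat i = 1 / 8)
    ∧ (∑ i, b i * A.mulVec (fun j => c j ^ 2) i + 2 * ∑ i, b i * Ahat.mulVec c i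
        + ∑ i, bhat i * c i ^ 2 = 1 / 12)
    ∧ (∑ i, b i * A.mulVec (A.mulVec c) i + ∑ i, b i * A.mulVec chat i
        + ∑ i, b i * Ahat.mulVec c i + ∑ i, bhat i * A.mulVec c i
        + ∑ i, bhat i * chat i = 1 / 24)
    -- p = 5
    ∧ (∑ i, b i * c i ^ 4 + 4 * ∑ i, bhat i * c i ^ 3 = 1 / 5)
    ∧ (∑ i, b i * c i ^ 2 * A.mulVec c i + ∑ i, b i * c i ^ 2 * chat i
        + ∑ i, bhat i * c i ^ 3 + 2 * ∑ i, bhat i * c i * A.mulVec c i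
        + 2 * ∑ i, bhat i * c i * chat i = 1 / 10)
    ∧ (∑ i, b i * c i * A.mulVec (fun j => c j ^ 2) i
        + 2 * ∑ i, b i * c i * Ahat.mulVec c i + ∑ i, bhat i * c i ^ 3
        + ∑ i, bhat i * A.mulVec (fun j => c j ^ 2) i
        + 2 * ∑ i, bhat i * Ahat.mulVec c i = 1 / 15)
    ∧ (∑ i, b i * c i * A.mulVec (A.mulVec c) i + ∑ i, b i * c i * A.mulVec chat i
        + ∑ i, b i * c i * Ahat.mulVec c i + ∑ i, bhat i * c i * A.mulVec c i
        + ∑ i, bhat i * c i * chat i + ∑ i, bhat i * A.mulVec (A.mulVec c) i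
        + ∑ i, bhat i * A.mulVec chat i + ∑ i, bhat i * Ahat.mulVec c i = 1 / 30)
    ∧ (∑ i, b i * A.mulVec c i * A.mulVec c i + 2 * ∑ i, b i * chat i * A.mulVec c i
        + ∑ i, b i * chat i ^ 2 + 2 * ∑ i, bhat i * c i * A.mulVec c i
        + 2 * ∑ i, bhat i * c i * chat i = 1 / 20)
    ∧ (∑ i, b i * A.mulVec (fun j => c j ^ 3) i
        + 3 * ∑ i, b i * Ahat.mulVec (fun j => c j ^ 2) i
        + ∑ i, bhat i * c i ^ 3 = 1 / 20)
    ∧ (∑ i, b i * A.mulVec (fun j => c j * A.mulVec c j) i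
        + ∑ i, b i * A.mulVec (fun j => c j * chat j) i
        + ∑ i, b i * Ahat.mulVec (fun j => c j ^ 2) i
        + ∑ i, b i * Ahat.mulVec (A.mulVec c) i
        + ∑ i, b i * Ahat.mulVec chat i
        + ∑ i, bhat i * c i * A.mulVec c i + ∑ i, bhat i * c i * chat i = 1 / 40)
    ∧ (∑ i, b i * A.mulVec (A.mulVec (fun j => c j ^ 2)) i
        + 2 * ∑ i, b i * A.mulVec (Ahat.mulVec c) i
        + ∑ i, b i * Ahat.mulVec (fun j => c j ^ 2) i
        + ∑ i, bhat i * A.mulVec (fun j => c j ^ 2) i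
        + 2 * ∑ i, bhat i * Ahat.mulVec c i = 1 / 60)
    ∧ (∑ i, b i * A.mulVec (A.mulVec (A.mulVec c)) i
        + ∑ i, b i * A.mulVec (A.mulVec chat) i
        + ∑ i, b i * A.mulVec (Ahat.mulVec c) i
        + ∑ i, b i * Ahat.mulVec (A.mulVec c) i
        + ∑ i, b i * Ahat.mulVec chat i
        + ∑ i, bhat i * A.mulVec (A.mulVec c) i
        + ∑ i, bhat i * A.mulVec chat i
        + ∑ i, bhat i * Ahat.mulVec c i = 1 / 120) := by
  have hd : 1 - 2 * a21 ≠ 0 := fun h ↦ h12 (by linarith)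
  have hne : a31 ≠ a21 := nodes_ne ((eq_div_iff hd).1 ha31)
  have hah31' : ah31 = a31 ^ 2 / 2 - ah32 := by rw [hah31, ha31, div_pow]; ring
  obtain ⟨order_one, order_two, order_three, order_four, order_five⟩ :=
    three_stage_fifth_order_exists_general h0 h12 h35 hne ha31 hah32 hbh2 hbh3
  subst hc hchat hA hAhat hb hbhat hah21 hah31' hbh1
  exact ⟨order_one, order_two, order_three.1, order_three.2, order_four.1, order_four.2.1,
    order_four.2.2.1, order_four.2.2.2, order_five⟩
end
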